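/- Let V ∈ 𝒫^{s,p}_q(ℝⁿ), g ∈ W^{s,p}(ℝⁿ), K ∈ 𝒦_p, and let x₀ ∈ Ω and r > 0 satisfy B_{2r}(x₀) ⊂ Ω. If u ∈ Y^{s,p}_g(Ω)^− is a weak subsolution of L^p_K u + V|u|^{p−2}u = 0 in Ω with exterior data g, then for every M ∈ (0,∞) and every nonnegative ζ ∈ C_c^∞(B_r(x₀)), setting w = (u−M)_+ and c_p = (1/2)·(2(p−1))^{p−1}: ∫_{B_r(x₀)} (w(y)ζ(y))^p·V(y) dy + ∬_{B_r(x₀)×B_r(x₀)} |ζ(x)w(x) − ζ(y)w(y)|^p·K(x−y) dx dy ≤ 2^{2p+1}·(1/4 + c_p)·∬_{B_r(x₀)×B_r(x₀)} (max{w(x),w(y)})^p·|ζ(x)−ζ(y)|^p·K(x−y) dx dy + 2^{p+2}·( sup_{x ∈ supp ζ} ∫_{ℝⁿ∖B_r(x₀)} w(y)^{p−1}·K(x−y) dy )·‖w·ζ^p‖_{L¹(B_r(x₀))}. -/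

import Mathlib

open MeasureTheory Real Set Metric Filter ENNReal

noncomputable section

abbrev Rn (n : ℕ) : Type := EuclideanSpace ℝ (Fin n)

namespace NLS

/-- The normalization constant `c_{n,p,s}`. -/
def cnps (n : ℕ) (p s : ℝ) : ℝ :=
  Real.Gamma (((n : ℝ) + p) / 2) * p * (1 - s) /
    (Real.pi ^ (((n : ℝ) - 1) / 2) * Real.Gamma ((p + 1) / 2))

/-- Membership in the kernel class `𝒦_p`. -/
def KernelClass (n : ℕ) (p s lam Lam : ℝ) (K : Rn n → ℝ) : Prop :=
  Measurable K ∧ (∀ y, K (-y) = K y) ∧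
    ∀ y : Rn n, y ≠ 0 →
      cnps n p s * lam * ‖y‖ ^ (-(n : ℝ) - p * s) ≤ K y ∧
        K y ≤ cnps n p s * Lam * ‖y‖ ^ (-(n : ℝ) - p * s)

/-- `H_p(t) = |t|^{p-2} t`. -/
def Hp (p t : ℝ) : ℝ := |t| ^ (p - 2) * t

/-- Positive part of a function. -/
def plusPart {n : ℕ} (f : Rn n → ℝ) : Rn n → ℝ := fun x => max (f x) 0

/-- Negative part of a function. -/
def minusPart {n : ℕ} (f : Rn n → ℝ) : Rn n → ℝ := fun x => max (-f x) 0

/-- The Gagliardo integrand `|u(x)-u(y)|^p |x-y|^{-n-ps}`. -/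
def gagliardoIntegrand (n : ℕ) (p s : ℝ) (u : Rn n → ℝ) (z : Rn n × Rn n) : ℝ :=
  |u z.1 - u z.2| ^ p * ‖z.1 - z.2‖ ^ (-(n : ℝ) - p * s)

/-- The Gagliardo seminorm `[u]_{W^{s,p}(U)}`. -/
def gagliardoSemi (n : ℕ) (p s : ℝ) (U : Set (Rn n)) (u : Rn n → ℝ) : ℝ :=
  (∫ z in U ×ˢ U, gagliardoIntegrand n p s u z) ^ (1 / p)

/-- The `L^p(U)` norm. -/
def lpNormOn (n : ℕ) (p : ℝ) (U : Set (Rn n)) (u : Rn n → ℝ) : ℝ :=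
  (∫ x in U, |u x| ^ p) ^ (1 / p)

/-- The `W^{s,p}(U)` norm. -/
def wspNorm (n : ℕ) (p s : ℝ) (U : Set (Rn n)) (u : Rn n → ℝ) : ℝ :=
  lpNormOn n p U u + gagliardoSemi n p s U u

/-- Membership in the fractional Sobolev space `W^{s,p}(U)`. -/
def MemWsp (n : ℕ) (p s : ℝ) (U : Set (Rn n)) (u : Rn n → ℝ) : Prop :=
  Measurable u ∧ IntegrableOn (fun x => |u x| ^ p) U ∧
    IntegrableOn (gagliardoIntegrand n p s u) (U ×ˢ U)

/-- `ℝ^{2n}_Ω = ℝ^{2n} ∖ (Ωᶜ × Ωᶜ)`. -/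
def R2n (n : ℕ) (Ω : Set (Rn n)) : Set (Rn n × Rn n) := {z | z.1 ∈ Ω ∨ z.2 ∈ Ω}

/-- Membership in `X^{s,p}(Ω)`. -/
def MemX (n : ℕ) (p s : ℝ) (Ω : Set (Rn n)) (u : Rn n → ℝ) : Prop :=
  Measurable u ∧ IntegrableOn (fun x => |u x| ^ p) Ω ∧
    IntegrableOn (gagliardoIntegrand n p s u) (R2n n Ω)

/-- Membership in `X^{s,p}_0(Ω)`. -/
def MemX0 (n : ℕ) (p s : ℝ) (Ω : Set (Rn n)) (u : Rn n → ℝ) : Prop :=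
  MemX n p s Ω u ∧ ∀ᵐ x ∂(volume : Measure (Rn n)), x ∉ Ω → u x = 0

/-- The norm `‖u‖_{X^{s,p}_0(Ω)}`. -/
def normX0 (n : ℕ) (p s : ℝ) (Ω : Set (Rn n)) (u : Rn n → ℝ) : ℝ :=
  (∫ z in R2n n Ω, gagliardoIntegrand n p s u z) ^ (1 / p)

/-- Open axis-parallel cube with center `c` and half side-length `h`. -/
def cube (n : ℕ) (c : Fin n → ℝ) (h : ℝ) : Set (Rn n) := {y | ∀ i, |y i - c i| < h}

/-- The `(A_1,A_1)` characteristic `[υ,ω]_{(A_1,A_1)}`. -/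
def A1const (n : ℕ) (υ ω : Rn n → ℝ) : ℝ≥0∞ :=
  ⨆ (c : Fin n → ℝ) (h : ℝ) (_ : 0 < h),
    ENNReal.ofReal (⨍ y in cube n c h, υ y) *
      essSup (fun y => (ENNReal.ofReal (ω y))⁻¹) (volume.restrict (cube n c h))

/-- `(υ,ω)` belongs to the `(A_1,A_1)`-Muckenhoupt class. -/
def A1pair (n : ℕ) (υ ω : Rn n → ℝ) : Prop := A1const n υ ω < ⊤

/-- `ω` belongs to the `A_1`-Muckenhoupt class. -/
def A1 (n : ℕ) (ω : Rn n → ℝ) : Prop := A1pair n ω ω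

/-- Membership in the potential class `𝒫^{s,p}_q(ℝⁿ)`. -/
structure IsPotential (n : ℕ) (p s q : ℝ) (V : Rn n → ℝ) : Prop where
  measurable : Measurable V
  minusPart_locInt : LocallyIntegrable (minusPart V) volume
  plusPart_locLq : LocallyIntegrable (fun x => plusPart V x ^ q) volume
  exists_b : ∃ b : Rn n → ℝ, Measurable b ∧ (∀ᵐ x ∂(volume : Measure (Rn n)), 0 < b x) ∧
    (∃ M : ℝ, ∀ x, |b x| ≤ M) ∧
    LocallyIntegrable (fun x => (plusPart V x / b x) ^ q) volume ∧
    ∀ i : ℕ, 0 < i →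
      A1pair n (minusPart V) (fun x => max (b x) (1 / (i : ℝ)) / b x * plusPart V x) ∧
      A1 n (fun x => max (b x) (1 / (i : ℝ)) / b x * plusPart V x)

/-- Membership in the weighted class `L^p_V(Ω)`. -/
def MemLpV (n : ℕ) (p : ℝ) (Ω : Set (Rn n)) (V u : Rn n → ℝ) : Prop :=
  IntegrableOn (fun x => |u x| ^ p * plusPart V x) Ω ∧
    IntegrableOn (fun x => |u x| ^ p * minusPart V x) Ω

/-- Membership in `Y^{s,p}(Ω)`. -/
def MemY (n : ℕ) (p s : ℝ) (Ω : Set (Rn n)) (V u : Rn n → ℝ) : Prop :=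
  MemX n p s Ω u ∧ MemLpV n p Ω V u

/-- Membership in `Y^{s,p}_0(Ω)`. -/
def MemY0 (n : ℕ) (p s : ℝ) (Ω : Set (Rn n)) (V u : Rn n → ℝ) : Prop :=
  MemX0 n p s Ω u ∧ MemLpV n p Ω V u

/-- Membership in `Y^{s,p}_g(Ω)^+`. -/
def MemYgPlus (n : ℕ) (p s : ℝ) (Ω : Set (Rn n)) (V g u : Rn n → ℝ) : Prop :=
  MemY n p s Ω V u ∧ MemY0 n p s Ω V (fun x => max (g x - u x) 0)

/-- Membership in `Y^{s,p}_g(Ω)^-`. -/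
def MemYgMinus (n : ℕ) (p s : ℝ) (Ω : Set (Rn n)) (V g u : Rn n → ℝ) : Prop :=
  MemY n p s Ω V u ∧ MemY0 n p s Ω V (fun x => max (u x - g x) 0)

/-- Membership in `Y^{s,p}_g(Ω)`. -/
def MemYg (n : ℕ) (p s : ℝ) (Ω : Set (Rn n)) (V g u : Rn n → ℝ) : Prop :=
  MemYgPlus n p s Ω V g u ∧ MemYgMinus n p s Ω V g u

/-- The pairing `⟨u,φ⟩_{H_p,K}`. -/
def pairing (n : ℕ) (p : ℝ) (K u φ : Rn n → ℝ) : ℝ :=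
  ∫ z : Rn n × Rn n, Hp p (u z.1 - u z.2) * (φ z.1 - φ z.2) * K (z.1 - z.2)

/-- `u` is a weak subsolution of `L^p_K u + V|u|^{p-2}u = 0` in `Ω` with exterior data `g`. -/
def WeakSubsolution (n : ℕ) (p s : ℝ) (Ω : Set (Rn n)) (K V g u : Rn n → ℝ) : Prop :=
  MemYgMinus n p s Ω V g u ∧
    ∀ φ : Rn n → ℝ, MemY0 n p s Ω V φ → (∀ x, 0 ≤ φ x) →
      pairing n p K u φ + ∫ x : Rn n, V x * (|u x| ^ (p - 2) * u x) * φ x ≤ 0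

/-- `u` is a weak supersolution of `L^p_K u + V|u|^{p-2}u = 0` in `Ω` with exterior data `g`. -/
def WeakSupersolution (n : ℕ) (p s : ℝ) (Ω : Set (Rn n)) (K V g u : Rn n → ℝ) : Prop :=
  MemYgPlus n p s Ω V g u ∧
    ∀ φ : Rn n → ℝ, MemY0 n p s Ω V φ → (∀ x, 0 ≤ φ x) →
      0 ≤ pairing n p K u φ + ∫ x : Rn n, V x * (|u x| ^ (p - 2) * u x) * φ x

/-- `u` is a weak solution of `L^p_K u + V|u|^{p-2}u = 0` in `Ω` with exterior data `g`. -/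
def WeakSolution (n : ℕ) (p s : ℝ) (Ω : Set (Rn n)) (K V g u : Rn n → ℝ) : Prop :=
  MemYg n p s Ω V g u ∧
    ∀ φ : Rn n → ℝ, MemY0 n p s Ω V φ →
      pairing n p K u φ + ∫ x : Rn n, V x * (|u x| ^ (p - 2) * u x) * φ x = 0

/-- The surface measure `|S^{n-1}|` of the unit sphere of `ℝⁿ`. -/
def sphereArea (n : ℕ) : ℝ := n * (volume (Metric.ball (0 : Rn n) 1)).toReal

/-- The nonlocal tail `𝒯_r(u;x₀)`. -/
def tail (n : ℕ) (p s : ℝ) (u : Rn n → ℝ) (x₀ : Rn n) (r : ℝ) : ℝ :=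
  (p * s / sphereArea n * r ^ (p * s) *
      ∫ y in (Metric.ball x₀ r)ᶜ, |u y| ^ (p - 1) * ‖y - x₀‖ ^ (-(n : ℝ) - p * s)) ^ (1 / (p - 1))

def supOn {n : ℕ} (u : Rn n → ℝ) (B : Set (Rn n)) : ℝ := sSup (u '' B)
def infOn {n : ℕ} (u : Rn n → ℝ) (B : Set (Rn n)) : ℝ := sInf (u '' B)
def oscOn {n : ℕ} (u : Rn n → ℝ) (B : Set (Rn n)) : ℝ := supOn u B - infOn u B

/-- The `L^q(Ω)` norm, used for `‖V₊‖_{L^q(Ω)}`. -/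
def lqNormOn (n : ℕ) (q : ℝ) (Ω : Set (Rn n)) (f : Rn n → ℝ) : ℝ :=
  (∫ x in Ω, |f x| ^ q) ^ (1 / q)

/-- The Hölder seminorm `[u]_{C^ε(B)}`. -/
def holderSemi {n : ℕ} (ε : ℝ) (B : Set (Rn n)) (u : Rn n → ℝ) : ℝ :=
  sSup ((fun z : Rn n × Rn n => |u z.1 - u z.2| / ‖z.1 - z.2‖ ^ ε) ''
    ((B ×ˢ B) ∩ {z | z.1 ≠ z.2}))

/-- The sup norm `‖u‖_{C(B)}`. -/
def cNorm {n : ℕ} (B : Set (Rn n)) (u : Rn n → ℝ) : ℝ := sSup ((fun x => |u x|) '' B)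

/-- The Hölder norm `‖u‖_{C^ε(B)}`. -/
def holderNorm {n : ℕ} (ε : ℝ) (B : Set (Rn n)) (u : Rn n → ℝ) : ℝ :=
  cNorm B u + holderSemi ε B u

/-- `u` is locally `ε`-Hölder continuous in `Ω`. -/
def LocallyHolder {n : ℕ} (ε : ℝ) (Ω : Set (Rn n)) (u : Rn n → ℝ) : Prop :=
  ∀ (x₀ : Rn n) (r : ℝ), closure (Metric.ball x₀ r) ⊆ Ω →
    ∃ L : ℝ, ∀ x ∈ Metric.ball x₀ r, ∀ y ∈ Metric.ball x₀ r, |u x - u y| ≤ L * ‖x - y‖ ^ ε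

end NLS

open NLS

/-!
Test the equation with `φ = w ζ^p`, where `w = (u - M)₊`. Near the support of `ζ`, the increment
`H_p(u(x) - u(y)) (φ(x) - φ(y))` dominates `2^(-p) |ζ(x) w(x) - ζ(y) w(y)|^p` up to a multiple of
`max(w(x), w(y))^p |ζ(x) - ζ(y)|^p`: the error comes from exchanging `ζ(x)^p` for `ζ(y)^p` along the
tangent of `t ↦ t^p`, followed by Young's inequality. For `x ∈ B_r(x₀)` and `y ∉ B_r(x₀)` only the
sign of `u(x) - u(y)` matters, and the loss is at most `w(y)^(p-1) φ(x)`, which the tail controls.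
The potential term has a sign because the Muckenhoupt condition on `(V₋, V₊^{b,i})` forces `V ≥ 0`
almost everywhere.
-/

namespace NLS

section RealInequalities

variable {p a b t z M : ℝ}

theorem rpow_sub_one_mul_self (hp : p ≠ 0) (ha : 0 ≤ a) : a ^ (p - 1) * a = a ^ p := by
  rw [← Real.rpow_add_one' ha (by simpa using hp), sub_add_cancel]

theorem rpow_sub_one_mul_le_add (hp : 1 ≤ p) (ha : 0 ≤ a) (hb : 0 ≤ b) :
    a ^ (p - 1) * b ≤ a ^ p + b ^ p := by
  have hp0 : p ≠ 0 := by linarith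
  rcases le_total a b with h | h
  · calc a ^ (p - 1) * b ≤ b ^ (p - 1) * b := by gcongr
      _ = b ^ p := rpow_sub_one_mul_self hp0 hb
      _ ≤ a ^ p + b ^ p := le_add_of_nonneg_left (by positivity)
  · calc a ^ (p - 1) * b ≤ a ^ (p - 1) * a := by gcongr
      _ = a ^ p := rpow_sub_one_mul_self hp0 ha
      _ ≤ a ^ p + b ^ p := le_add_of_nonneg_right (by positivity)

theorem rpow_add_mul_sub_le_rpow (hp : 1 < p) (ha : 0 ≤ a) (hb : 0 ≤ b) :
    a ^ p + p * a ^ (p - 1) * (b - a) ≤ b ^ p := by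
  rcases ha.eq_or_lt with rfl | ha
  · simpa [Real.zero_rpow (show p ≠ 0 by linarith), Real.zero_rpow (show p - 1 ≠ 0 by linarith)]
      using Real.rpow_nonneg hb p
  have bernoulli : 1 + p * (b / a - 1) ≤ (b / a) ^ p := by
    simpa using one_add_mul_self_le_rpow_one_add (s := b / a - 1)
      (by linarith [div_nonneg hb ha.le]) hp.le
  calc a ^ p + p * a ^ (p - 1) * (b - a) = (1 + p * (b / a - 1)) * a ^ p := by
        rw [← rpow_sub_one_mul_self (by linarith) ha.le]; field_simp
    _ ≤ (b / a) ^ p * a ^ p := by gcongr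
    _ = b ^ p := by rw [← Real.mul_rpow (by positivity) ha.le, div_mul_cancel₀ b ha.ne']

/-- The constant `1/4 + c_p` of the Caccioppoli inequality, with
`c_p = (1/2) (2(p-1))^(p-1)`. -/
def caccioppoliConst (p : ℝ) : ℝ := 1 / 4 + 1 / 2 * (2 * (p - 1)) ^ (p - 1)

theorem caccioppoliConst_nonneg (hp : 1 ≤ p) : 0 ≤ caccioppoliConst p := by
  have : 0 ≤ 2 * (p - 1) := by linarith
  unfold caccioppoliConst
  positivity

theorem mul_rpow_sub_one_mul_le_young (hp : 1 < p) (ha : 0 ≤ a) (hb : 0 ≤ b) :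
    p * a ^ (p - 1) * b ≤ 1 / 2 * a ^ p + (2 * (p - 1)) ^ (p - 1) * b ^ p := by
  have hl : 0 < 2 * (p - 1) := by linarith
  have h := rpow_add_mul_sub_le_rpow hp ha (mul_nonneg hl.le hb)
  rw [Real.mul_rpow hl.le hb, ← rpow_sub_one_mul_self (by linarith) hl.le] at h
  have ha' := rpow_sub_one_mul_self (p := p) (by linarith) ha
  refine le_of_mul_le_mul_left ?_ hl
  linear_combination h + p * ha'

theorem abs_sub_rpow_le (hp : 1 ≤ p) (a b : ℝ) :
    |a - b| ^ p ≤ 2 ^ (p - 1) * (|a| ^ p + |b| ^ p) := by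
  have add_rpow_le : (|a| + |b|) ^ p ≤ 2 ^ (p - 1) * (|a| ^ p + |b| ^ p) := by
    exact_mod_cast NNReal.rpow_add_le_mul_rpow_add_rpow ⟨|a|, abs_nonneg a⟩ ⟨|b|, abs_nonneg b⟩ hp
  refine le_trans ?_ add_rpow_le
  gcongr
  exact abs_sub a b

theorem abs_mul_sub_mul_rpow_le (hp : 1 ≤ p) (a b e f : ℝ) :
    |a * e - b * f| ^ p ≤ 2 ^ (p - 1) * ((|f| * |a - b|) ^ p + (|a| * |e - f|) ^ p) := by
  calc |a * e - b * f| ^ p = |f * (a - b) - a * (f - e)| ^ p := by ring_nf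
    _ ≤ 2 ^ (p - 1) * ((|f| * |a - b|) ^ p + (|a| * |e - f|) ^ p) := by
        simpa only [abs_mul, abs_sub_comm f e] using
          abs_sub_rpow_le hp (f * (a - b)) (a * (f - e))

theorem abs_rpow_sub_rpow_le {C : ℝ} (hp : 1 < p) (ha : 0 ≤ a) (hb : 0 ≤ b) (haC : a ≤ C)
    (hbC : b ≤ C) : |a ^ p - b ^ p| ≤ p * C ^ (p - 1) * |a - b| := by
  wlog hba : b ≤ a generalizing a b
  · rw [abs_sub_comm, abs_sub_comm a]
    exact this hb ha hbC haC (le_of_not_ge hba)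
  have hd : 0 ≤ a - b := sub_nonneg.2 hba
  rw [abs_of_nonneg hd, abs_of_nonneg (sub_nonneg.2 (by gcongr))]
  calc a ^ p - b ^ p ≤ p * a ^ (p - 1) * (a - b) := by
        linarith [rpow_add_mul_sub_le_rpow hp ha hb]
    _ ≤ p * C ^ (p - 1) * (a - b) := by gcongr

theorem half_mul_rpow_sub_le (hp : 1 < p) (hb : 0 ≤ b) (hba : b ≤ a) (hz : 0 ≤ z) (ht : 0 ≤ t) :
    1 / 2 * ((a - b) * t) ^ p - (2 * (p - 1)) ^ (p - 1) * (a * |z - t|) ^ p ≤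
      (a - b) ^ (p - 1) * (a * z ^ p - b * t ^ p) := by
  have ha : 0 ≤ a := hb.trans hba
  have hd : 0 ≤ a - b := sub_nonneg.2 hba
  have tangent : t ^ p - p * t ^ (p - 1) * |z - t| ≤ z ^ p := by
    have h : p * t ^ (p - 1) * -|z - t| ≤ p * t ^ (p - 1) * (z - t) := by
      gcongr; exact neg_abs_le _
    linarith [rpow_add_mul_sub_le_rpow hp ht hz]
  calc 1 / 2 * ((a - b) * t) ^ p - (2 * (p - 1)) ^ (p - 1) * (a * |z - t|) ^ p
      ≤ ((a - b) * t) ^ p - p * ((a - b) * t) ^ (p - 1) * (a * |z - t|) := by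
        linarith [mul_rpow_sub_one_mul_le_young hp (mul_nonneg hd ht)
          (mul_nonneg ha (abs_nonneg (z - t)))]
    _ = (a - b) ^ (p - 1) * (a * (t ^ p - p * t ^ (p - 1) * |z - t|) - b * t ^ p) := by
        rw [Real.mul_rpow hd ht, Real.mul_rpow hd ht,
          ← rpow_sub_one_mul_self (by linarith : p ≠ 0) hd]
        ring
    _ ≤ (a - b) ^ (p - 1) * (a * z ^ p - b * t ^ p) := by gcongr

theorem two_rpow_neg_mul_abs_sub_rpow_le (hp : 1 < p) (hb : 0 ≤ b) (hba : b ≤ a) (hz : 0 ≤ z)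
    (ht : 0 ≤ t) :
    2 ^ (-p) * |z * a - t * b| ^ p - 2 * caccioppoliConst p * (a ^ p * |z - t| ^ p) ≤
      (a - b) ^ (p - 1) * (a * z ^ p - b * t ^ p) := by
  have ha : 0 ≤ a := hb.trans hba
  have two_rpow : (2 : ℝ) ^ (-p) * 2 ^ (p - 1) = 1 / 2 := by
    rw [← Real.rpow_add two_pos, show -p + (p - 1) = -1 by ring, Real.rpow_neg_one, one_div]
  have convexity : 2 ^ (-p) * |z * a - t * b| ^ p ≤
      1 / 2 * (((a - b) * t) ^ p + (a * |z - t|) ^ p) := by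
    rw [← two_rpow, mul_assoc, mul_comm z, mul_comm t, mul_comm (a - b)]
    gcongr
    simpa only [abs_of_nonneg, ha, ht, sub_nonneg.2 hba]
      using abs_mul_sub_mul_rpow_le hp.le a b z t
  rw [← Real.mul_rpow ha (abs_nonneg _), caccioppoliConst]
  linarith [half_mul_rpow_sub_le hp hb hba hz ht]

theorem Hp_of_nonneg (hp : 1 < p) (ht : 0 ≤ t) : Hp p t = t ^ (p - 1) := by
  rw [Hp, abs_of_nonneg ht, ← rpow_sub_one_mul_self (p := p - 1) (by linarith) ht]
  ring_nf

theorem Hp_neg (p t : ℝ) : Hp p (-t) = -Hp p t := by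
  rw [Hp, Hp, abs_neg, mul_neg]

theorem abs_Hp (hp : 1 < p) (t : ℝ) : |Hp p t| = |t| ^ (p - 1) := by
  rw [← Hp_of_nonneg hp (abs_nonneg t), Hp, Hp, abs_mul, abs_abs, abs_of_nonneg (by positivity)]

theorem measurable_Hp (p : ℝ) : Measurable (Hp p) := by
  unfold Hp; fun_prop

theorem abs_Hp_mul_le (hp : 1 < p) (a b : ℝ) : |Hp p a * b| ≤ |a| ^ p + |b| ^ p := by
  rw [abs_mul, abs_Hp hp]
  exact rpow_sub_one_mul_le_add hp.le (abs_nonneg a) (abs_nonneg b)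

theorem le_Hp_sub_mul_truncation (hp : 1 < p) (hz : 0 ≤ z) (ht : 0 ≤ t) (a b M : ℝ) :
    2 ^ (-p) * |z * max (a - M) 0 - t * max (b - M) 0| ^ p -
        2 * caccioppoliConst p * (max (max (a - M) 0) (max (b - M) 0) ^ p * |z - t| ^ p) ≤
      Hp p (a - b) * (max (a - M) 0 * z ^ p - max (b - M) 0 * t ^ p) := by
  wlog hba : b ≤ a generalizing a b z t
  · rw [abs_sub_comm, max_comm (max (a - M) 0), abs_sub_comm z, ← neg_sub b a, Hp_neg,
      ← neg_sub (max (b - M) 0 * t ^ p), neg_mul_neg]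
    exact this ht hz b a (le_of_not_ge hba)
  have hw : max (b - M) 0 ≤ max (a - M) 0 := by gcongr
  rw [max_eq_left hw, Hp_of_nonneg hp (sub_nonneg.2 hba)]
  refine (two_rpow_neg_mul_abs_sub_rpow_le hp (le_max_right _ _) hw hz ht).trans ?_
  rcases le_total M b with h | h
  · rw [max_eq_left (by linarith), max_eq_left (by linarith), sub_sub_sub_cancel_right]
  · rw [max_eq_right (by linarith : b - M ≤ 0)]
    simp only [sub_zero, zero_mul]
    have : 0 ≤ max (a - M) 0 := le_max_right _ _
    gcongr
    exact max_le (by linarith) (by linarith)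

theorem neg_le_Hp_sub_mul_truncation (hp : 1 < p) (a b M : ℝ) :
    -(max (b - M) 0 ^ (p - 1) * max (a - M) 0) ≤ Hp p (a - b) * max (a - M) 0 := by
  rcases le_total a M with h | h
  · simp [max_eq_right (by linarith : a - M ≤ 0)]
  have hb : 0 ≤ max (b - M) 0 ^ (p - 1) := Real.rpow_nonneg (le_max_right _ _) _
  rw [← neg_mul]
  refine mul_le_mul_of_nonneg_right ?_ (le_max_right _ _)
  rcases le_total b a with hba | hab
  · rw [Hp_of_nonneg hp (sub_nonneg.2 hba)]
    linarith [Real.rpow_nonneg (sub_nonneg.2 hba) (p - 1)]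
  · rw [← neg_sub b a, Hp_neg, Hp_of_nonneg hp (sub_nonneg.2 hab), neg_le_neg_iff]
    exact Real.rpow_le_rpow (sub_nonneg.2 hab) (le_max_of_le_left (by linarith)) (by linarith)

theorem truncation_mul_rpow_le_Hp_mul (hp : 1 < p) (hM : 0 ≤ M) (hz : 0 ≤ z) (a : ℝ) :
    (max (a - M) 0 * z) ^ p ≤ Hp p a * (max (a - M) 0 * z ^ p) := by
  have hw : 0 ≤ max (a - M) 0 := le_max_right _ _
  rw [Real.mul_rpow hw hz, ← rpow_sub_one_mul_self (by linarith) hw, mul_assoc]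
  rcases le_total a M with h | h
  · simp [max_eq_right (by linarith : a - M ≤ 0)]
  · rw [Hp_of_nonneg hp (hM.trans h)]
    gcongr
    exact max_le (by linarith) (hM.trans h)

theorem add_le_of_add_two_rpow_neg_mul_le (hp : 0 ≤ p) {P I J T : ℝ} (hP : 0 ≤ P) (hJ : 0 ≤ J)
    (hT : 0 ≤ T) (h : P + 2 ^ (-p) * I ≤ 2 * J + 2 * T) :
    P + I ≤ 2 ^ (2 * p + 1) * J + 2 ^ (p + 2) * T := by
  have one_le : (1 : ℝ) ≤ 2 ^ p := Real.one_le_rpow one_le_two hp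
  calc P + I ≤ 2 ^ p * P + I := by gcongr; exact le_mul_of_one_le_left hP one_le
    _ = 2 ^ p * (P + 2 ^ (-p) * I) := by
        rw [mul_add, ← mul_assoc, ← Real.rpow_add two_pos, add_neg_cancel, Real.rpow_zero, one_mul]
    _ ≤ 2 ^ p * (2 * J + 2 * T) := by gcongr
    _ = 2 ^ (p + 1) * J + 2 ^ (p + 1) * T := by rw [Real.rpow_add_one two_ne_zero]; ring
    _ ≤ 2 ^ (2 * p + 1) * J + 2 ^ (p + 2) * T := by gcongr <;> linarith

end RealInequalities

section Kernels

variable {n : ℕ} {p s Λ : ℝ} {K : Rn n → ℝ}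

/-- The homogeneous kernel `|z|^(-n-ps)` of the fractional `p`-Laplacian. Its value at `z = 0` is
`0` (as the exponent is negative), so it carries no information on the diagonal. -/
def fracKernel (n : ℕ) (p s : ℝ) (z : Rn n) : ℝ := ‖z‖ ^ (-(n : ℝ) - p * s)

/-- The kernel `min(1,|z|)^p |z|^(-n-ps)`, an integrable weight controlling the Gagliardo integrand
of bounded Lipschitz functions. -/
def truncFracKernel (n : ℕ) (p s : ℝ) (z : Rn n) : ℝ := min 1 ‖z‖ ^ p * fracKernel n p s z

/-- Symmetric nonnegative kernels bounded above by a multiple of `|z|^(-n-ps)`. Only the values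
off the origin are constrained. -/
structure IsDominatedKernel (n : ℕ) (p s Λ : ℝ) (K : Rn n → ℝ) : Prop where
  measurable : Measurable K
  map_neg : ∀ z, K (-z) = K z
  nonneg : ∀ z, z ≠ 0 → 0 ≤ K z
  le_mul_fracKernel : ∀ z, z ≠ 0 → K z ≤ Λ * fracKernel n p s z

theorem fracKernel_nonneg (z : Rn n) : 0 ≤ fracKernel n p s z :=
  Real.rpow_nonneg (norm_nonneg z) _

@[fun_prop]
theorem measurable_fracKernel (n : ℕ) (p s : ℝ) : Measurable (fracKernel n p s) := by
  unfold fracKernel; fun_prop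

theorem fracKernel_sub_comm (x y : Rn n) : fracKernel n p s (x - y) = fracKernel n p s (y - x) := by
  rw [fracKernel, fracKernel, norm_sub_rev]

theorem truncFracKernel_sub_comm (x y : Rn n) :
    truncFracKernel n p s (x - y) = truncFracKernel n p s (y - x) := by
  rw [truncFracKernel, truncFracKernel, norm_sub_rev, fracKernel_sub_comm]

theorem fracKernel_le_of_norm_le {c : ℝ} (hps : 0 ≤ p * s) (hc : 0 < c) {y z : Rn n} (hz : z ≠ 0)
    (hzy : ‖z‖ ≤ c * ‖y‖) :
    fracKernel n p s y ≤ c ^ ((n : ℝ) + p * s) * fracKernel n p s z := by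
  have hz0 : 0 < ‖z‖ := norm_pos_iff.2 hz
  calc fracKernel n p s y ≤ (‖z‖ / c) ^ (-(n : ℝ) - p * s) :=
        Real.rpow_le_rpow_of_nonpos (by positivity) ((div_le_iff₀' hc).2 hzy)
          (by linarith [n.cast_nonneg (α := ℝ)])
    _ = c ^ ((n : ℝ) + p * s) * fracKernel n p s z := by
        rw [Real.div_rpow hz0.le hc.le, ← neg_add', Real.rpow_neg hc.le, div_inv_eq_mul,
          mul_comm, fracKernel, neg_add']

theorem fracKernel_le_mul_truncFracKernel {ρ : ℝ} (hp : 0 ≤ p) (hρ : 0 < ρ) {z : Rn n}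
    (hz : ρ ≤ ‖z‖) : fracKernel n p s z ≤ (min 1 ρ ^ p)⁻¹ * truncFracKernel n p s z := by
  have : 0 < min 1 ρ := lt_min one_pos hρ
  rw [← div_eq_inv_mul, le_div_iff₀' (by positivity), truncFracKernel]
  gcongr
  exact fracKernel_nonneg z

theorem integrable_truncFracKernel (n : ℕ) (hp : 0 < p) (hs0 : 0 < s) (hs1 : s < 1) :
    Integrable (truncFracKernel n p s) := by
  have hps : 0 < p * s := by positivity
  have hps' : p * s < p := by nlinarith
  obtain rfl | hn := n.eq_zero_or_pos
  · exact Integrable.of_finite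
  have : Nonempty (Fin n) := ⟨⟨0, hn⟩⟩
  refine (integrable_fun_norm_addHaar (E := Rn n) volume
    (f := fun t : ℝ => min 1 t ^ p * t ^ (-(n : ℝ) - p * s))).2 ?_
  have radial_rpow (a : ℝ) {t : ℝ} (ht : 0 < t) :
      t ^ (n - 1) * (t ^ a * t ^ (-(n : ℝ) - p * s)) = t ^ (a - p * s - 1) := by
    rw [← Real.rpow_natCast, ← Real.rpow_add ht, ← Real.rpow_add ht, Nat.cast_pred hn]
    ring_nf
  rw [finrank_euclideanSpace_fin, ← Ioc_union_Ioi_eq_Ioi (zero_le_one (α := ℝ))]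
  refine IntegrableOn.union ?_ ?_
  · refine ((intervalIntegrable_iff_integrableOn_Ioc_of_le zero_le_one).1
      (intervalIntegral.intervalIntegrable_rpow' (r := p - p * s - 1)
        (by linarith))).congr_fun (fun t ht => ?_) measurableSet_Ioc
    simp only [smul_eq_mul, min_eq_right ht.2]
    exact (radial_rpow p ht.1).symm
  · refine (integrableOn_Ioi_rpow_of_lt (a := 0 - p * s - 1) (by linarith)
      one_pos).congr_fun (fun t ht => ?_) measurableSet_Ioi
    have ht1 : 1 < t := ht
    simp only [smul_eq_mul, min_eq_left ht1.le, Real.one_rpow]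
    simpa only [Real.rpow_zero] using (radial_rpow 0 (one_pos.trans ht1)).symm

theorem cnps_nonneg (hp : 0 ≤ p) (hs1 : s ≤ 1) : 0 ≤ cnps n p s := by
  have : 0 ≤ 1 - s := sub_nonneg.2 hs1
  have : 0 ≤ Real.Gamma (((n : ℝ) + p) / 2) := Real.Gamma_nonneg_of_nonneg (by positivity)
  have : 0 ≤ Real.Gamma ((p + 1) / 2) := Real.Gamma_nonneg_of_nonneg (by positivity)
  unfold cnps
  positivity

theorem KernelClass.isDominatedKernel {lam : ℝ} (hK : KernelClass n p s lam Λ K) (hp : 0 ≤ p)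
    (hs1 : s ≤ 1) (hlam : 0 ≤ lam) : IsDominatedKernel n p s (cnps n p s * Λ) K where
  measurable := hK.1
  map_neg := hK.2.1
  nonneg z hz := (mul_nonneg (mul_nonneg (cnps_nonneg hp hs1) hlam) (fracKernel_nonneg z)).trans
    (hK.2.2 z hz).1
  le_mul_fracKernel z hz := (hK.2.2 z hz).2

namespace IsDominatedKernel

theorem sub_comm (hK : IsDominatedKernel n p s Λ K) (x y : Rn n) : K (x - y) = K (y - x) := by
  rw [← hK.map_neg, neg_sub]

theorem mul_apply_sub_le (hK : IsDominatedKernel n p s Λ K) {x y : Rn n} {a b : ℝ}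
    (hdiag : x = y → a = b) (hab : a ≤ b) : a * K (x - y) ≤ b * K (x - y) := by
  rcases eq_or_ne x y with h | h
  · rw [hdiag h]
  · exact mul_le_mul_of_nonneg_right hab (hK.nonneg _ (sub_ne_zero.2 h))

theorem integrableOn_mul (hK : IsDominatedKernel n p s Λ K) {f g : Rn n × Rn n → ℝ}
    {S : Set (Rn n × Rn n)} (hf : Measurable f) (hfg : ∀ z, |f z| ≤ g z)
    (hdiag : ∀ x, g (x, x) = 0)
    (hg : IntegrableOn (fun z => g z * fracKernel n p s (z.1 - z.2)) S) :
    IntegrableOn (fun z => f z * K (z.1 - z.2)) S := by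
  have hKm := hK.measurable
  refine Integrable.mono' (hg.const_mul Λ) (by fun_prop) (Eventually.of_forall ?_)
  rintro ⟨x, y⟩
  rcases eq_or_ne x y with rfl | hxy
  · have : f (x, x) = 0 := abs_nonpos_iff.1 ((hfg _).trans (hdiag x).le)
    simp [this, hdiag]
  · have hz : x - y ≠ 0 := sub_ne_zero.2 hxy
    calc ‖f (x, y) * K (x - y)‖ = |f (x, y)| * K (x - y) := by
          rw [norm_mul, Real.norm_eq_abs, Real.norm_of_nonneg (hK.nonneg _ hz)]
      _ ≤ g (x, y) * (Λ * fracKernel n p s (x - y)) :=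
          mul_le_mul (hfg _) (hK.le_mul_fracKernel _ hz) (hK.nonneg _ hz)
            ((abs_nonneg _).trans (hfg _))
      _ = Λ * (g (x, y) * fracKernel n p s (x - y)) := by ring

end IsDominatedKernel

end Kernels

section ProductIntegrals

variable {α β : Type*} [MeasurableSpace α] [MeasurableSpace β] {μ : Measure α} {ν : Measure β}

theorem integral_prod_eq_of_swap_invariant [SFinite μ] {F : α × α → ℝ} {B : Set α}
    (hB : MeasurableSet B) (hF : Integrable F (μ.prod μ)) (hswap : ∀ z, F z.swap = F z)
    (hzero : ∀ z, z.1 ∉ B → z.2 ∉ B → F z = 0) :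
    ∫ z, F z ∂μ.prod μ = ∫ z in B ×ˢ B, F z ∂μ.prod μ + 2 * ∫ z in B ×ˢ Bᶜ, F z ∂μ.prod μ := by
  have cross_swap : ∫ z in Bᶜ ×ˢ B, F z ∂μ.prod μ = ∫ z in B ×ˢ Bᶜ, F z ∂μ.prod μ := by
    simpa only [hswap] using setIntegral_prod_swap (μ := μ) (ν := μ) B Bᶜ F
  have disjoint_compl : Disjoint B Bᶜ := disjoint_compl_right
  calc ∫ z, F z ∂μ.prod μ = ∫ z in B ×ˢ B ∪ B ×ˢ Bᶜ ∪ Bᶜ ×ˢ B, F z ∂μ.prod μ := by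
        refine (setIntegral_eq_integral_of_forall_compl_eq_zero fun z hz => ?_).symm
        simp only [mem_union, mem_prod, mem_compl_iff] at hz
        exact hzero z (by tauto) (by tauto)
    _ = ∫ z in B ×ˢ B, F z ∂μ.prod μ + ∫ z in B ×ˢ Bᶜ, F z ∂μ.prod μ +
          ∫ z in Bᶜ ×ˢ B, F z ∂μ.prod μ := by
        rw [← prod_union, setIntegral_union _ (hB.compl.prod hB) hF.integrableOn hF.integrableOn,
          prod_union, setIntegral_union _ (hB.prod hB.compl) hF.integrableOn hF.integrableOn]
        exacts [disjoint_prod.2 (.inr disjoint_compl), disjoint_prod.2 (.inl disjoint_compl)]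
    _ = _ := by rw [cross_swap]; ring

theorem integrableOn_prod_mul_of_le [SFinite μ] [SFinite ν] {A S : Set α} {B : Set β} {f : α → ℝ}
    {h : β → ℝ} {k : α × β → ℝ} (hB : MeasurableSet B) (hf : IntegrableOn f A μ)
    (hfS : ∀ x ∉ S, f x = 0) (hk : Measurable k) (hh : IntegrableOn h B ν)
    (hkh : ∀ x ∈ S, ∀ y ∈ B, |k (x, y)| ≤ h y) :
    IntegrableOn (fun z => f z.1 * k z) (A ×ˢ B) (μ.prod ν) := by
  rw [IntegrableOn, ← Measure.prod_restrict]
  refine (Integrable.mul_prod hf.norm hh).mono'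
    (hf.aestronglyMeasurable.comp_fst.mul hk.aestronglyMeasurable) ?_
  filter_upwards [Measure.quasiMeasurePreserving_snd.ae (ae_restrict_mem hB)] with z hz
  by_cases hzS : z.1 ∈ S
  · rw [norm_mul]
    exact mul_le_mul_of_nonneg_left (hkh z.1 hzS z.2 hz) (norm_nonneg _)
  · simp [hfS z.1 hzS]

theorem setIntegral_prod_mul_le_sSup_mul [SFinite μ] [SFinite ν] {A S : Set α} {B : Set β}
    {f : α → ℝ} {h : β → ℝ} {k : α × β → ℝ} (hB : MeasurableSet B) (hf : IntegrableOn f A μ)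
    (hf0 : ∀ x, 0 ≤ f x) (hfS : ∀ x ∉ S, f x = 0) (hk : Measurable k) (hh : IntegrableOn h B ν)
    (hkh : ∀ x ∈ S, ∀ y ∈ B, |k (x, y)| ≤ h y) :
    ∫ z in A ×ˢ B, f z.1 * k z ∂μ.prod ν ≤
      sSup ((fun x => ∫ y in B, k (x, y) ∂ν) '' S) * ∫ x in A, f x ∂μ := by
  have hbdd : BddAbove ((fun x => ∫ y in B, k (x, y) ∂ν) '' S) := by
    refine ⟨∫ y in B, h y ∂ν, ?_⟩
    rintro _ ⟨x, hx, rfl⟩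
    refine (le_norm_self _).trans (norm_integral_le_of_norm_le hh ?_)
    exact ae_restrict_of_forall_mem hB (hkh x hx)
  have hint := integrableOn_prod_mul_of_le hB hf hfS hk hh hkh
  rw [setIntegral_prod _ hint, ← integral_const_mul]
  rw [IntegrableOn, ← Measure.prod_restrict] at hint
  refine integral_mono hint.integral_prod_left (hf.const_mul _) fun x => ?_
  simp only [integral_const_mul]
  by_cases hx : x ∈ S
  · rw [mul_comm]
    exact mul_le_mul_of_nonneg_right (le_csSup hbdd ⟨x, hx, rfl⟩) (hf0 x)
  · simp [hfS x hx]

theorem integrableOn_prod_univ_mul_comp_sub {G : Type*} [AddGroup G] [MeasurableSpace G]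
    [MeasurableAdd₂ G] [MeasurableNeg G] {μ : Measure G} [SFinite μ] [μ.IsAddRightInvariant]
    [μ.IsNegInvariant] {S : Set G} {f k : G → ℝ} (hf : IntegrableOn f S μ) (hk : Integrable k μ) :
    IntegrableOn (fun z : G × G => f z.1 * k (z.1 - z.2)) (S ×ˢ univ) (μ.prod μ) := by
  rw [IntegrableOn, ← Measure.prod_restrict, Measure.restrict_univ]
  simpa [Function.comp_def] using
    (Integrable.convolution_integrand (ContinuousLinearMap.mul ℝ ℝ) hf hk.comp_neg).swap

end ProductIntegrals

section FunctionSpaces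

variable {n : ℕ} {p s C : ℝ} {Ω : Set (Rn n)} {V f u φ η : Rn n → ℝ}

/-- Nonnegative functions bounded by `C` and Lipschitz with constant `C`, the two bounds on the
increments being merged into `|η x - η y| ≤ C min(1,|x-y|)`. These act by multiplication on
`X^{s,p}(Ω)`. -/
structure IsCutoff (C : ℝ) (η : Rn n → ℝ) : Prop where
  nonneg : ∀ x, 0 ≤ η x
  le : ∀ x, η x ≤ C
  abs_sub_le : ∀ x y, |η x - η y| ≤ C * min 1 ‖x - y‖

namespace IsCutoff

theorem const_nonneg (hη : IsCutoff C η) : 0 ≤ C := (hη.nonneg 0).trans (hη.le 0)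

theorem abs_apply_le (hη : IsCutoff C η) (x : Rn n) : |η x| ≤ C :=
  (abs_of_nonneg (hη.nonneg x)).trans_le (hη.le x)

theorem measurable (hη : IsCutoff C η) : Measurable η := by
  refine (LipschitzWith.of_dist_le_mul (K := C.toNNReal) fun x y => ?_).continuous.measurable
  rw [Real.dist_eq, dist_eq_norm, Real.coe_toNNReal C hη.const_nonneg]
  exact (hη.abs_sub_le x y).trans
    (mul_le_mul_of_nonneg_left (min_le_right _ _) hη.const_nonneg)

theorem of_lipschitzWith {L : NNReal} (hη : LipschitzWith L η) (h0 : ∀ x, 0 ≤ η x)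
    (hC : ∀ x, η x ≤ C) : IsCutoff (C + L) η where
  nonneg := h0
  le x := (hC x).trans (le_add_of_nonneg_right L.2)
  abs_sub_le x y := by
    have hC0 : 0 ≤ C := (h0 0).trans (hC 0)
    rcases le_total 1 ‖x - y‖ with h | h
    · rw [min_eq_left h, mul_one, abs_le]
      constructor <;> linarith [h0 x, h0 y, hC x, hC y, L.coe_nonneg]
    · rw [min_eq_right h, ← dist_eq_norm, ← Real.dist_eq]
      exact (hη.dist_le_mul x y).trans
        (mul_le_mul_of_nonneg_right (le_add_of_nonneg_left hC0) dist_nonneg)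

theorem rpow (hη : IsCutoff C η) (hp : 1 < p) : IsCutoff (p * C ^ p) fun x => η x ^ p where
  nonneg x := Real.rpow_nonneg (hη.nonneg x) p
  le x := (Real.rpow_le_rpow (hη.nonneg x) (hη.le x) (by linarith)).trans
    (le_mul_of_one_le_left (Real.rpow_nonneg hη.const_nonneg p) hp.le)
  abs_sub_le x y := by
    have hC := hη.const_nonneg
    calc |η x ^ p - η y ^ p| ≤ p * C ^ (p - 1) * |η x - η y| :=
          abs_rpow_sub_rpow_le hp (hη.nonneg x) (hη.nonneg y) (hη.le x) (hη.le y)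
      _ ≤ p * C ^ (p - 1) * (C * min 1 ‖x - y‖) := by gcongr; exact hη.abs_sub_le x y
      _ = p * C ^ p * min 1 ‖x - y‖ := by
          rw [← rpow_sub_one_mul_self (by linarith : p ≠ 0) hC]; ring

theorem abs_sub_rpow_mul_fracKernel_le (hη : IsCutoff C η) (hp : 0 ≤ p) (x y : Rn n) :
    |η x - η y| ^ p * fracKernel n p s (x - y) ≤ C ^ p * truncFracKernel n p s (x - y) := by
  rw [truncFracKernel, ← mul_assoc, ← Real.mul_rpow hη.const_nonneg (by positivity)]
  gcongr
  · exact fracKernel_nonneg _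
  · exact hη.abs_sub_le x y

end IsCutoff

theorem measurable_gagliardoIntegrand (hu : Measurable u) :
    Measurable (gagliardoIntegrand n p s u) := by
  unfold gagliardoIntegrand; fun_prop

theorem gagliardoIntegrand_swap (z : Rn n × Rn n) :
    gagliardoIntegrand n p s u z.swap = gagliardoIntegrand n p s u z := by
  simp only [gagliardoIntegrand, Prod.fst_swap, Prod.snd_swap, abs_sub_comm (u z.2),
    norm_sub_rev z.2]

theorem gagliardoIntegrand_nonneg (z : Rn n × Rn n) : 0 ≤ gagliardoIntegrand n p s u z :=
  mul_nonneg (by positivity) (fracKernel_nonneg _)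

theorem IsCutoff.gagliardoIntegrand_mul_le (hη : IsCutoff C η) (hp : 1 ≤ p) (z : Rn n × Rn n) :
    gagliardoIntegrand n p s (fun x => f x * η x) z ≤ 2 ^ (p - 1) * C ^ p *
      (gagliardoIntegrand n p s f z + |f z.1| ^ p * truncFracKernel n p s (z.1 - z.2)) := by
  obtain ⟨x, y⟩ := z
  have hk := fracKernel_nonneg (p := p) (s := s) (x - y)
  calc |f x * η x - f y * η y| ^ p * fracKernel n p s (x - y)
      ≤ 2 ^ (p - 1) * ((C * |f x - f y|) ^ p + (|f x| * |η x - η y|) ^ p) *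
          fracKernel n p s (x - y) := by
        gcongr
        refine (abs_mul_sub_mul_rpow_le hp _ _ _ _).trans ?_
        gcongr
        exact hη.abs_apply_le y
    _ = 2 ^ (p - 1) * (C ^ p * (|f x - f y| ^ p * fracKernel n p s (x - y)) +
          |f x| ^ p * (|η x - η y| ^ p * fracKernel n p s (x - y))) := by
        rw [Real.mul_rpow hη.const_nonneg (abs_nonneg _),
          Real.mul_rpow (abs_nonneg _) (abs_nonneg _)]
        ring
    _ ≤ 2 ^ (p - 1) * (C ^ p * (|f x - f y| ^ p * fracKernel n p s (x - y)) +
          |f x| ^ p * (C ^ p * truncFracKernel n p s (x - y))) := by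
        gcongr 2 ^ (p - 1) * (_ + _ * ?_)
        exact hη.abs_sub_rpow_mul_fracKernel_le (by linarith) x y
    _ = 2 ^ (p - 1) * C ^ p * (|f x - f y| ^ p * fracKernel n p s (x - y) +
          |f x| ^ p * truncFracKernel n p s (x - y)) := by ring

theorem integrableOn_R2n_iff {F : Rn n × Rn n → ℝ} (hswap : ∀ z, F z.swap = F z) :
    IntegrableOn F (R2n n Ω) ↔ IntegrableOn F (Ω ×ˢ univ) := by
  have hR2n : R2n n Ω = Ω ×ˢ univ ∪ univ ×ˢ Ω := by ext; simp [R2n]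
  rw [hR2n, integrableOn_union, and_iff_left_iff_imp]
  intro h
  rw [← show F ∘ Prod.swap = F from funext hswap]
  exact IntegrableOn.swap h

namespace MemX

theorem integrableOn_gagliardoIntegrand (hu : MemX n p s Ω u) {A : Set (Rn n)} (hA : A ⊆ Ω)
    (B : Set (Rn n)) : IntegrableOn (gagliardoIntegrand n p s u) (A ×ˢ B) :=
  hu.2.2.mono_set fun _ hz => Or.inl (hA hz.1)

theorem of_contraction (hu : MemX n p s Ω u) (hp : 0 ≤ p) (hf : Measurable f)
    (hle : ∀ x, |f x| ≤ |u x|) (hsub : ∀ x y, |f x - f y| ≤ |u x - u y|) : MemX n p s Ω f := by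
  refine ⟨hf, hu.2.1.mono' (by fun_prop) (Eventually.of_forall fun x => ?_),
    hu.2.2.mono' (measurable_gagliardoIntegrand hf).aestronglyMeasurable
      (Eventually.of_forall fun z => ?_)⟩
  · rw [Real.norm_of_nonneg (by positivity)]
    exact Real.rpow_le_rpow (abs_nonneg _) (hle x) hp
  · rw [Real.norm_of_nonneg (gagliardoIntegrand_nonneg z)]
    exact mul_le_mul_of_nonneg_right (Real.rpow_le_rpow (abs_nonneg _) (hsub _ _) hp)
      (fracKernel_nonneg _)

theorem mul_cutoff (hf : MemX n p s Ω f) (hη : IsCutoff C η) (hp : 1 < p) (hs0 : 0 < s)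
    (hs1 : s < 1) : MemX n p s Ω fun x => f x * η x := by
  have hfm := hf.1
  have hηm := hη.measurable
  have hm : Measurable fun x => f x * η x := by fun_prop
  refine ⟨hm, ?_, (integrableOn_R2n_iff gagliardoIntegrand_swap).2 ?_⟩
  · refine (hf.2.1.mul_const (C ^ p)).mono' (hm.abs.pow_const p).aestronglyMeasurable
      (Eventually.of_forall fun x => ?_)
    rw [Real.norm_of_nonneg (by positivity), abs_mul, Real.mul_rpow (abs_nonneg _) (abs_nonneg _)]
    gcongr
    exact hη.abs_apply_le x
  · refine Integrable.mono' (((hf.integrableOn_gagliardoIntegrand subset_rfl univ).add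
      (integrableOn_prod_univ_mul_comp_sub hf.2.1
        (integrable_truncFracKernel n (by linarith : 0 < p) hs0 hs1))).const_mul
      (2 ^ (p - 1) * C ^ p)) (measurable_gagliardoIntegrand hm).aestronglyMeasurable
      (Eventually.of_forall fun z => ?_)
    rw [Real.norm_of_nonneg (gagliardoIntegrand_nonneg z)]
    exact hη.gagliardoIntegrand_mul_le hp.le z

end MemX

theorem MemLpV.of_abs_le_mul {c : ℝ} (hu : MemLpV n p Ω V u) (hp : 0 ≤ p) (hV : Measurable V)
    (hf : Measurable f) (hle : ∀ x, |f x| ≤ c * |u x|) : MemLpV n p Ω V f := by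
  have of_weight {ω : Rn n → ℝ} (hω : Measurable ω) (hω0 : ∀ x, 0 ≤ ω x)
      (hint : IntegrableOn (fun x => |u x| ^ p * ω x) Ω) :
      IntegrableOn (fun x => |f x| ^ p * ω x) Ω := by
    refine (hint.const_mul (|c| ^ p)).mono' (by fun_prop) (Eventually.of_forall fun x => ?_)
    have hx := hω0 x
    rw [Real.norm_of_nonneg (by positivity), ← mul_assoc,
      ← Real.mul_rpow (abs_nonneg _) (abs_nonneg _)]
    gcongr
    exact (hle x).trans (by gcongr; exact le_abs_self c)
  exact ⟨of_weight (hV.max measurable_const) (fun _ => le_max_right _ _) hu.1,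
    of_weight (hV.neg.max measurable_const) (fun _ => le_max_right _ _) hu.2⟩

theorem abs_eq_plusPart_add_minusPart (f : Rn n → ℝ) (x : Rn n) :
    |f x| = plusPart f x + minusPart f x := by
  rcases le_total 0 (f x) with h | h <;> simp [plusPart, minusPart, abs_of_nonneg, abs_of_nonpos, h]

theorem MemLpV.integrableOn_abs_rpow_mul_abs (hu : MemLpV n p Ω V u) :
    IntegrableOn (fun x => |u x| ^ p * |V x|) Ω := by
  simp only [abs_eq_plusPart_add_minusPart V, mul_add]
  exact hu.1.add hu.2

theorem MemLpV.integrable_mul_Hp_mul (hu : MemLpV n p Ω V u) (hφ : MemLpV n p Ω V φ) (hp : 1 < p)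
    (hV : Measurable V) (hum : Measurable u) (hφm : Measurable φ)
    (hφΩ : ∀ᵐ x, x ∉ Ω → φ x = 0) : Integrable fun x => V x * Hp p (u x) * φ x := by
  have hHp := (measurable_Hp p).comp hum
  refine IntegrableOn.integrable_of_ae_notMem_eq_zero (s := Ω) ?_ ?_
  · refine (hu.integrableOn_abs_rpow_mul_abs.add hφ.integrableOn_abs_rpow_mul_abs).mono'
      ((hV.mul hHp).mul hφm).aestronglyMeasurable (Eventually.of_forall fun x => ?_)
    rw [mul_assoc, norm_mul, Pi.add_apply, ← add_mul, mul_comm]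
    exact mul_le_mul_of_nonneg_right (abs_Hp_mul_le hp _ _) (abs_nonneg _)
  · filter_upwards [hφΩ] with x hx hxΩ
    rw [hx hxΩ, mul_zero]

/-- The integrand of `⟨u, φ⟩_{H_p,K}`. -/
def pairingIntegrand (p : ℝ) (K u φ : Rn n → ℝ) (z : Rn n × Rn n) : ℝ :=
  Hp p (u z.1 - u z.2) * (φ z.1 - φ z.2) * K (z.1 - z.2)

theorem IsDominatedKernel.pairingIntegrand_swap {Λ : ℝ} {K : Rn n → ℝ}
    (hK : IsDominatedKernel n p s Λ K) (z : Rn n × Rn n) :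
    pairingIntegrand p K u φ z.swap = pairingIntegrand p K u φ z := by
  obtain ⟨x, y⟩ := z
  simp only [pairingIntegrand, Prod.swap_prod_mk]
  rw [hK.sub_comm y x, ← neg_sub (u x), Hp_neg, ← neg_sub (φ x), neg_mul_neg]

theorem IsDominatedKernel.integrable_pairingIntegrand {Λ : ℝ} {K : Rn n → ℝ}
    (hK : IsDominatedKernel n p s Λ K) (hp : 1 < p) (hu : MemX n p s Ω u)
    (hφ : MemX0 n p s Ω φ) :
    Integrable (pairingIntegrand p K u φ) := by
  have hum := hu.1
  have hφm := hφ.1.1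
  refine IntegrableOn.integrable_of_ae_notMem_eq_zero (s := R2n n Ω) ?_ ?_
  · refine hK.integrableOn_mul
      (((measurable_Hp p).comp (by fun_prop : Measurable fun z : Rn n × Rn n => u z.1 - u z.2)).mul
        (by fun_prop)) (fun z => abs_Hp_mul_le hp _ _) (fun x => ?_) ?_
    · simp [Real.zero_rpow (by linarith : p ≠ 0)]
    · simp only [add_mul]
      exact hu.2.2.add hφ.1.2.2
  · filter_upwards [Measure.quasiMeasurePreserving_fst.ae hφ.2,
      Measure.quasiMeasurePreserving_snd.ae hφ.2] with z h1 h2 hz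
    obtain ⟨hz1, hz2⟩ := not_or.1 hz
    rw [pairingIntegrand, h1 hz1, h2 hz2, sub_self, mul_zero, zero_mul]

end FunctionSpaces

section Tail

variable {n : ℕ} {p s Λ r ρ : ℝ} {Ω : Set (Rn n)} {K f : Rn n → ℝ} {x₀ x y : Rn n}

theorem sub_lt_norm_sub_of_mem_ball_of_notMem_ball (hx : x ∈ ball x₀ ρ) (hy : y ∉ ball x₀ r) :
    r - ρ < ‖x - y‖ := by
  rw [mem_ball, dist_eq_norm] at hx
  rw [mem_ball, not_lt, dist_comm, dist_eq_norm] at hy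
  have := norm_sub_le_norm_sub_add_norm_sub x₀ x y
  rw [norm_sub_rev x₀ x] at this
  linarith

theorem fracKernel_le_center (hps : 0 ≤ p * s) (hr : 0 < r) (hρ : ρ < r) (hx : x ∈ ball x₀ ρ)
    (hy : y ∉ ball x₀ r) :
    fracKernel n p s (x - y) ≤ (r / (r - ρ)) ^ ((n : ℝ) + p * s) * fracKernel n p s (x₀ - y) := by
  have hrρ : 0 < r - ρ := sub_pos.2 hρ
  rw [mem_ball, dist_eq_norm, norm_sub_rev] at hx
  rw [mem_ball, not_lt, dist_comm, dist_eq_norm] at hy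
  refine fracKernel_le_of_norm_le hps (by positivity) (norm_pos_iff.1 (hr.trans_le hy)) ?_
  rw [div_mul_eq_mul_div, le_div_iff₀ hrρ]
  have hρ0 : 0 ≤ ρ := (norm_nonneg _).trans hx.le
  have hxy : ‖x₀ - y‖ - ρ ≤ ‖x - y‖ := by linarith [norm_sub_le_norm_sub_add_norm_sub x₀ x y]
  nlinarith [mul_le_mul_of_nonneg_left hy hρ0, mul_le_mul_of_nonneg_left hxy hr.le]

theorem fracKernel_center_le (hps : 0 ≤ p * s) (hρ : ρ ≤ r) (hx : x ∈ ball x₀ ρ)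
    (hy : y ∉ ball x₀ r) :
    fracKernel n p s (x₀ - y) ≤ 2 ^ ((n : ℝ) + p * s) * fracKernel n p s (x - y) := by
  have hxy := sub_lt_norm_sub_of_mem_ball_of_notMem_ball hx hy
  rw [mem_ball, dist_eq_norm] at hx
  rw [mem_ball, not_lt, dist_comm, dist_eq_norm] at hy
  refine fracKernel_le_of_norm_le hps two_pos (norm_pos_iff.1 (by linarith)) ?_
  linarith [norm_sub_le_norm_sub_add_norm_sub x x₀ y]

theorem MemX.exists_integrable_gagliardoIntegrand_slice (hf : MemX n p s Ω f) (hr : 0 < r)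
    (hB : ball x₀ r ⊆ Ω) :
    ∃ x ∈ ball x₀ r, Integrable fun y => gagliardoIntegrand n p s f (x, y) := by
  have hint := hf.integrableOn_gagliardoIntegrand hB univ
  rw [IntegrableOn, Measure.volume_eq_prod, ← Measure.prod_restrict, Measure.restrict_univ] at hint
  have : NeBot (ae (volume.restrict (ball x₀ r))) :=
    ae_restrict_neBot.2 (measure_ball_pos volume x₀ hr).ne'
  obtain ⟨x, hx, hxB⟩ := (hint.prod_right_ae.and (ae_restrict_mem measurableSet_ball)).exists
  exact ⟨x, hxB, hx⟩

theorem MemX.integrableOn_tail (hf : MemX n p s Ω f) (hp : 1 < p) (hs0 : 0 < s) (hs1 : s < 1)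
    (hr : 0 < r) (hB : ball x₀ r ⊆ Ω) :
    IntegrableOn (fun y => |f y| ^ (p - 1) * fracKernel n p s (x₀ - y)) (ball x₀ r)ᶜ := by
  obtain ⟨x, hx, hslice⟩ := hf.exists_integrable_gagliardoIntegrand_slice (half_pos hr)
    ((ball_subset_ball (half_le_self hr.le)).trans hB)
  have htrunc := (integrable_truncFracKernel n (by linarith : 0 < p) hs0 hs1).comp_sub_left x
  have hfm := hf.1
  set A := 1 + 2 ^ (p - 1) * |f x| ^ p
  set m := (min 1 (r / 2) ^ p)⁻¹
  have growth (y : Rn n) : |f y| ^ (p - 1) ≤ A + 2 ^ (p - 1) * |f x - f y| ^ p := by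
    have h1 := rpow_sub_one_mul_le_add hp.le (abs_nonneg (f y)) zero_le_one
    have h2 := abs_sub_rpow_le hp.le (f x) (f x - f y)
    rw [mul_one, Real.one_rpow] at h1
    rw [_root_.sub_sub_cancel] at h2
    linarith
  refine Integrable.mono' (((htrunc.const_mul (A * m)).add
    (hslice.const_mul (2 ^ (p - 1)))).const_mul (2 ^ ((n : ℝ) + p * s))).integrableOn
    (Measurable.aestronglyMeasurable (by fun_prop))
    (ae_restrict_of_forall_mem measurableSet_ball.compl fun y hy => ?_)
  have hk0 := fracKernel_nonneg (p := p) (s := s) (x₀ - y)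
  have := fracKernel_nonneg (p := p) (s := s) (x - y)
  have : 0 ≤ A := by positivity
  have hxy := sub_lt_norm_sub_of_mem_ball_of_notMem_ball hx hy
  rw [Real.norm_of_nonneg (by positivity)]
  calc |f y| ^ (p - 1) * fracKernel n p s (x₀ - y)
      ≤ (A + 2 ^ (p - 1) * |f x - f y| ^ p) *
          (2 ^ ((n : ℝ) + p * s) * fracKernel n p s (x - y)) := by
        gcongr
        · exact growth y
        · exact fracKernel_center_le (by positivity) (half_le_self hr.le) hx hy
    _ = 2 ^ ((n : ℝ) + p * s) * (A * fracKernel n p s (x - y) +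
          2 ^ (p - 1) * gagliardoIntegrand n p s f (x, y)) := by
        rw [gagliardoIntegrand, ← fracKernel]; ring
    _ ≤ 2 ^ ((n : ℝ) + p * s) * (A * (m * truncFracKernel n p s (x - y)) +
          2 ^ (p - 1) * gagliardoIntegrand n p s f (x, y)) := by
        gcongr 2 ^ _ * (_ * ?_ + _)
        exact fracKernel_le_mul_truncFracKernel (by linarith) (half_pos hr) (by linarith)
    _ = _ := by rw [← mul_assoc A]; rfl

theorem IsDominatedKernel.exists_abs_le_fracKernel_center (hK : IsDominatedKernel n p s Λ K)
    (hps : 0 ≤ p * s) (hr : 0 < r) {S : Set (Rn n)} (hS : IsClosed S)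
    (hSB : S ⊆ ball x₀ r) :
    ∃ E, ∀ x ∈ S, ∀ y ∉ ball x₀ r, |K (x - y)| ≤ E * fracKernel n p s (x₀ - y) := by
  obtain ⟨ρ, ⟨-, hρr⟩, hSρ⟩ := exists_pos_lt_subset_ball hr hS hSB
  refine ⟨|Λ| * (r / (r - ρ)) ^ ((n : ℝ) + p * s), fun x hx y hy => ?_⟩
  have hxy : x - y ≠ 0 := norm_pos_iff.1
    ((sub_pos.2 hρr).trans (sub_lt_norm_sub_of_mem_ball_of_notMem_ball (hSρ hx) hy))
  calc |K (x - y)| = K (x - y) := abs_of_nonneg (hK.nonneg _ hxy)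
    _ ≤ Λ * fracKernel n p s (x - y) := hK.le_mul_fracKernel _ hxy
    _ ≤ |Λ| * ((r / (r - ρ)) ^ ((n : ℝ) + p * s) * fracKernel n p s (x₀ - y)) :=
        mul_le_mul (le_abs_self Λ) (fracKernel_le_center hps hr hρr (hSρ hx) hy)
          (fracKernel_nonneg _) (abs_nonneg Λ)
    _ = _ := (mul_assoc _ _ _).symm

end Tail

section Potentials

variable {n : ℕ} {υ ω : Rn n → ℝ} {h : ℝ} {c : Fin n → ℝ}

theorem measurableSet_cube : MeasurableSet (cube n c h) := by
  simp only [cube, ofPred_forall]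
  exact MeasurableSet.iInter fun i => measurableSet_lt (by fun_prop) measurable_const

theorem isBounded_cube : Bornology.IsBounded (cube n c h) := by
  refine (isBounded_iff_subset_closedBall (WithLp.toLp 2 c)).2 ⟨√(n * h ^ 2), fun y hy => ?_⟩
  rw [mem_closedBall, EuclideanSpace.dist_eq]
  refine Real.sqrt_le_sqrt ?_
  calc ∑ i, dist (y i) (c i) ^ 2 ≤ ∑ _i : Fin n, h ^ 2 := by
        gcongr with i
        exact (hy i).le
    _ = n * h ^ 2 := by simp

theorem ball_subset_cube (c : Rn n) : ball c h ⊆ cube n c h := fun y hy i => by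
  refine lt_of_le_of_lt ?_ hy
  rw [dist_eq_norm]
  exact PiLp.norm_apply_le (y - c) i

theorem le_A1const (υ ω : Rn n → ℝ) (c : Fin n → ℝ) (hh : 0 < h) :
    ENNReal.ofReal (⨍ y in cube n c h, υ y) *
      essSup (fun y => (ENNReal.ofReal (ω y))⁻¹) (volume.restrict (cube n c h)) ≤
      A1const n υ ω :=
  le_iSup₂_of_le c h (le_iSup (fun _ : 0 < h => _) hh)

theorem A1pair.ae_eq_zero_or_ae_pos (hA : A1pair n υ ω) (hh : 0 < h) (hυ0 : ∀ x, 0 ≤ υ x)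
    (hυ : IntegrableOn υ (cube n c h)) :
    (∀ᵐ x ∂volume.restrict (cube n c h), υ x = 0) ∨
      ∀ᵐ x ∂volume.restrict (cube n c h), 0 < ω x := by
  set Q := cube n c h
  by_cases h0 : ∫ x in Q, υ x = 0
  · exact .inl ((integral_eq_zero_iff_of_nonneg hυ0 hυ).1 h0)
  right
  have hvol : 0 < volume.real Q := by
    refine ENNReal.toReal_pos (fun hQ0 => h0 ?_) isBounded_cube.measure_lt_top.ne
    rw [Measure.restrict_eq_zero.2 hQ0, integral_zero_measure]
  have average_pos : 0 < ⨍ y in Q, υ y := by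
    rw [setAverage_eq, smul_eq_mul]
    exact mul_pos (inv_pos.2 hvol) ((integral_nonneg hυ0).lt_of_ne' h0)
  have hlt : ENNReal.ofReal (⨍ y in Q, υ y) *
      essSup (fun y => (ENNReal.ofReal (ω y))⁻¹) (volume.restrict Q) < ⊤ :=
    (le_A1const υ ω c hh).trans_lt hA
  have essSup_lt_top := ENNReal.lt_top_of_mul_ne_top_right hlt.ne (by simpa using average_pos)
  filter_upwards [ae_lt_of_essSup_lt essSup_lt_top] with x hx
  simpa using hx

/- On a cube where `V₋` does not vanish a.e., finiteness of the `(A₁,A₁)` characteristic of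
`(V₋, ω)` forces `ω > 0`, hence `V₊ > 0`, a.e.; so `V₋ = 0` a.e. after all. -/
theorem IsPotential.nonneg_ae {p s q : ℝ} {V : Rn n → ℝ} (hV : IsPotential n p s q V) :
    ∀ᵐ x, 0 ≤ V x := by
  obtain ⟨b, -, -, -, -, hb⟩ := hV.exists_b
  have on_cube (k : ℕ) : ∀ᵐ x, x ∈ cube n (0 : Rn n) (k + 1) → 0 ≤ V x := by
    rw [← ae_restrict_iff' measurableSet_cube]
    have hint : IntegrableOn (minusPart V) (cube n (0 : Rn n) (k + 1)) :=
      (hV.minusPart_locInt.integrableOn_isCompact isBounded_cube.isCompact_closure).mono_set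
        subset_closure
    rcases (hb 1 one_pos).1.ae_eq_zero_or_ae_pos (by positivity : (0 : ℝ) < k + 1)
      (fun x => le_max_right _ _) hint with hzero | hpos
    · filter_upwards [hzero] with x hx
      simpa [minusPart] using hx
    · filter_upwards [hpos] with x hx
      by_contra! hneg
      simp [plusPart, max_eq_right hneg.le] at hx
  filter_upwards [ae_all_iff.2 on_cube] with x hx
  obtain ⟨k, hk⟩ := exists_nat_gt ‖x‖
  exact hx k (ball_subset_cube 0 (mem_ball_zero_iff.2 (hk.trans (lt_add_one _))))

end Potentials

section Energy

variable {n : ℕ} {p s Λ C M r : ℝ} {Ω B S : Set (Rn n)} {K V f g u w ζ : Rn n → ℝ} {x₀ : Rn n}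

/-- The energy `∬_{B×B} |f(x) - f(y)|^p K(x - y) dx dy`. -/
def kernelEnergy (p : ℝ) (K : Rn n → ℝ) (B : Set (Rn n)) (f : Rn n → ℝ) : ℝ :=
  ∫ z in B ×ˢ B, |f z.1 - f z.2| ^ p * K (z.1 - z.2)

/-- The error `∬_{B×B} max(w(x), w(y))^p |ζ(x) - ζ(y)|^p K(x - y) dx dy` made by localizing the
energy of `w` with the cutoff `ζ`. -/
def cutoffEnergy (p : ℝ) (K : Rn n → ℝ) (B : Set (Rn n)) (w ζ : Rn n → ℝ) : ℝ :=
  ∫ z in B ×ˢ B, max (w z.1) (w z.2) ^ p * |ζ z.1 - ζ z.2| ^ p * K (z.1 - z.2)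

/-- The supremum over `x ∈ S` of the nonlocal tails `∫_{Bᶜ} w(y)^(p-1) K(x - y) dy`. -/
def supTail (p : ℝ) (K : Rn n → ℝ) (B S : Set (Rn n)) (w : Rn n → ℝ) : ℝ :=
  sSup ((fun x => ∫ y in Bᶜ, w y ^ (p - 1) * K (x - y)) '' S)

/-- The truncation `(u - M)₊`. -/
def truncation (M : ℝ) (u : Rn n → ℝ) : Rn n → ℝ := plusPart fun x => u x - M

/-- The test function `(u - M)₊ ζ^p`. -/
def caccioppoliTestFun (p M : ℝ) (u ζ : Rn n → ℝ) : Rn n → ℝ :=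
  fun x => truncation M u x * ζ x ^ p

theorem cutoffEnergy_nonneg (hK : IsDominatedKernel n p s Λ K) (hp : p ≠ 0)
    (hw : ∀ x, 0 ≤ w x) : 0 ≤ cutoffEnergy p K B w ζ := by
  refine integral_nonneg fun ⟨x, y⟩ => ?_
  have hmax : 0 ≤ max (w x) (w y) := le_max_of_le_left (hw x)
  rw [Pi.zero_apply, ← zero_mul (K (x - y))]
  refine hK.mul_apply_sub_le ?_ (by positivity)
  rintro rfl
  simp [Real.zero_rpow hp]

theorem supTail_nonneg (hK : IsDominatedKernel n p s Λ K) (hB : MeasurableSet B) (hSB : S ⊆ B)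
    (hw : ∀ x, 0 ≤ w x) : 0 ≤ supTail p K B S w := by
  refine Real.sSup_nonneg ?_
  rintro _ ⟨x, hx, rfl⟩
  refine setIntegral_nonneg hB.compl fun y hy => mul_nonneg (Real.rpow_nonneg (hw y) _) ?_
  exact hK.nonneg _ (sub_ne_zero.2 (ne_of_mem_of_not_mem (hSB hx) hy))

theorem truncation_nonneg (M : ℝ) (u : Rn n → ℝ) (x : Rn n) : 0 ≤ truncation M u x :=
  le_max_right _ _

theorem truncation_le_abs (hM : 0 ≤ M) (u : Rn n → ℝ) (x : Rn n) : truncation M u x ≤ |u x| :=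
  max_le (by linarith [le_abs_self (u x)]) (abs_nonneg _)

theorem abs_truncation_le_abs (hM : 0 ≤ M) (u : Rn n → ℝ) (x : Rn n) :
    |truncation M u x| ≤ |u x| :=
  (abs_of_nonneg (truncation_nonneg M u x)).trans_le (truncation_le_abs hM u x)

theorem abs_truncation_sub_le (M : ℝ) (u : Rn n → ℝ) (x y : Rn n) :
    |truncation M u x - truncation M u y| ≤ |u x - u y| := by
  simpa only [truncation, plusPart, sub_sub_sub_cancel_right] using
    abs_max_sub_max_le_abs (u x - M) (u y - M) 0

theorem memX_truncation (hu : MemX n p s Ω u) (hp : 0 ≤ p) (hM : 0 ≤ M) :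
    MemX n p s Ω (truncation M u) :=
  hu.of_contraction hp ((hu.1.sub_const M).max measurable_const) (abs_truncation_le_abs hM u)
    (abs_truncation_sub_le M u)

theorem caccioppoliTestFun_nonneg (hζ : ∀ x, 0 ≤ ζ x) (x : Rn n) :
    0 ≤ caccioppoliTestFun p M u ζ x :=
  mul_nonneg (truncation_nonneg M u x) (Real.rpow_nonneg (hζ x) p)

theorem caccioppoliTestFun_eq_zero (hp : p ≠ 0) {x : Rn n} (hx : ζ x = 0) :
    caccioppoliTestFun p M u ζ x = 0 := by
  rw [caccioppoliTestFun, hx, Real.zero_rpow hp, mul_zero]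

theorem memX_caccioppoliTestFun (hu : MemX n p s Ω u) (hζ : IsCutoff C ζ) (hp : 1 < p)
    (hs0 : 0 < s) (hs1 : s < 1) (hM : 0 ≤ M) : MemX n p s Ω (caccioppoliTestFun p M u ζ) :=
  (memX_truncation hu (by linarith) hM).mul_cutoff (hζ.rpow hp) hp hs0 hs1

theorem memY0_caccioppoliTestFun (hu : MemY n p s Ω V u) (hV : Measurable V) (hζ : IsCutoff C ζ)
    (hζΩ : ∀ x ∉ Ω, ζ x = 0) (hp : 1 < p) (hs0 : 0 < s) (hs1 : s < 1) (hM : 0 ≤ M) :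
    MemY0 n p s Ω V (caccioppoliTestFun p M u ζ) := by
  have hX := memX_caccioppoliTestFun hu.1 hζ hp hs0 hs1 hM
  refine ⟨⟨hX, Eventually.of_forall fun x hx =>
    caccioppoliTestFun_eq_zero (by linarith) (hζΩ x hx)⟩, ?_⟩
  refine hu.2.of_abs_le_mul (c := p * C ^ p) (by linarith) hV hX.1 fun x => ?_
  rw [caccioppoliTestFun, abs_mul, mul_comm]
  exact mul_le_mul ((hζ.rpow hp).abs_apply_le x) (abs_truncation_le_abs hM u x) (abs_nonneg _)
    (hζ.rpow hp).const_nonneg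

theorem MemX.integrableOn (hf : MemX n p s Ω f) (hp : 1 ≤ p) (hBΩ : B ⊆ Ω)
    (hB : volume B ≠ ⊤) : IntegrableOn f B := by
  refine Integrable.mono' ((integrableOn_const (C := (1 : ℝ)) hB).add (hf.2.1.mono_set hBΩ))
    hf.1.aestronglyMeasurable (Eventually.of_forall fun x => ?_)
  simpa using rpow_sub_one_mul_le_add hp zero_le_one (abs_nonneg (f x))

theorem IsCutoff.integrableOn_max_rpow_mul_fracKernel (hζ : IsCutoff C ζ) (hw : MemX n p s Ω w)
    (hw0 : ∀ x, 0 ≤ w x) (hp : 0 < p) (hs0 : 0 < s) (hs1 : s < 1) (hBΩ : B ⊆ Ω) :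
    IntegrableOn (fun z => max (w z.1) (w z.2) ^ p * |ζ z.1 - ζ z.2| ^ p *
      fracKernel n p s (z.1 - z.2)) (B ×ˢ B) := by
  have hwm := hw.1
  have hζm := hζ.measurable
  have fst_term : IntegrableOn
      (fun z : Rn n × Rn n => |w z.1| ^ p * truncFracKernel n p s (z.1 - z.2)) (B ×ˢ B) :=
    (integrableOn_prod_univ_mul_comp_sub (hw.2.1.mono_set hBΩ)
      (integrable_truncFracKernel n hp hs0 hs1)).mono_set (prod_mono_right (subset_univ B))
  refine Integrable.mono' ((fst_term.add fst_term.swap).const_mul (C ^ p)) (by fun_prop)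
    (Eventually.of_forall fun ⟨x, y⟩ => ?_)
  have hk := fracKernel_nonneg (p := p) (s := s) (x - y)
  have hmax : 0 ≤ max (w x) (w y) := le_max_of_le_left (hw0 x)
  have max_rpow_le : max (w x) (w y) ^ p ≤ w x ^ p + w y ^ p := by
    have hx := Real.rpow_nonneg (hw0 x) p
    have hy := Real.rpow_nonneg (hw0 y) p
    rcases max_choice (w x) (w y) with h | h <;> rw [h] <;> linarith
  rw [Real.norm_of_nonneg (by positivity)]
  calc max (w x) (w y) ^ p * |ζ x - ζ y| ^ p * fracKernel n p s (x - y)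
      ≤ (w x ^ p + w y ^ p) * (C ^ p * truncFracKernel n p s (x - y)) := by
        rw [mul_assoc]
        exact mul_le_mul max_rpow_le (hζ.abs_sub_rpow_mul_fracKernel_le hp.le x y)
          (by positivity) (by linarith [Real.rpow_nonneg hmax p])
    _ = C ^ p * (|w x| ^ p * truncFracKernel n p s (x - y) +
          |w y| ^ p * truncFracKernel n p s (y - x)) := by
        rw [abs_of_nonneg (hw0 x), abs_of_nonneg (hw0 y), truncFracKernel_sub_comm y x]
        ring

theorem le_setIntegral_prod_self (hK : IsDominatedKernel n p s Λ K)
    (hu : MemX n p s Ω u) (hζ : IsCutoff C ζ) (hp : 1 < p) (hs0 : 0 < s) (hs1 : s < 1)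
    (hM : 0 ≤ M) (hBΩ : B ⊆ Ω)
    (hF : IntegrableOn (pairingIntegrand p K u (caccioppoliTestFun p M u ζ)) (B ×ˢ B)) :
    2 ^ (-p) * kernelEnergy p K B (fun x => ζ x * truncation M u x) -
        2 * caccioppoliConst p * cutoffEnergy p K B (truncation M u) ζ ≤
      ∫ z in B ×ˢ B, pairingIntegrand p K u (caccioppoliTestFun p M u ζ) z := by
  have hw := memX_truncation hu (by linarith : 0 ≤ p) hM
  have hwm := hw.1
  have hζm := hζ.measurable
  have hp0 : p ≠ 0 := by linarith
  have energy_integrable : IntegrableOn (fun z : Rn n × Rn n =>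
      |ζ z.1 * truncation M u z.1 - ζ z.2 * truncation M u z.2| ^ p * K (z.1 - z.2))
      (B ×ˢ B) := by
    refine hK.integrableOn_mul (by fun_prop) (fun z => (abs_of_nonneg (by positivity)).le)
      (fun x => by simp [Real.zero_rpow hp0]) ?_
    simp only [mul_comm (ζ _)]
    exact (hw.mul_cutoff hζ hp hs0 hs1).integrableOn_gagliardoIntegrand hBΩ B
  have cutoff_integrable : IntegrableOn (fun z : Rn n × Rn n =>
      max (truncation M u z.1) (truncation M u z.2) ^ p * |ζ z.1 - ζ z.2| ^ p * K (z.1 - z.2))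
      (B ×ˢ B) := by
    refine hK.integrableOn_mul (by fun_prop) (fun z => (abs_of_nonneg ?_).le)
      (fun x => by simp [Real.zero_rpow hp0]) (hζ.integrableOn_max_rpow_mul_fracKernel hw
        (truncation_nonneg M u) (by linarith) hs0 hs1 hBΩ)
    have := le_max_of_le_left (b := truncation M u z.1) (c := truncation M u z.2)
      (truncation_nonneg M u z.1)
    positivity
  rw [kernelEnergy, cutoffEnergy, ← integral_const_mul, ← integral_const_mul,
    ← integral_sub (energy_integrable.const_mul _) (cutoff_integrable.const_mul _)]
  refine integral_mono ((energy_integrable.const_mul _).sub (cutoff_integrable.const_mul _)) hF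
    fun ⟨x, y⟩ => ?_
  simp only [← mul_assoc, ← sub_mul]
  refine hK.mul_apply_sub_le ?_ ?_
  · rintro rfl
    simp [Real.zero_rpow hp0]
  · rw [mul_assoc (2 * caccioppoliConst p)]
    exact le_Hp_sub_mul_truncation hp (hζ.nonneg x) (hζ.nonneg y) (u x) (u y) M

theorem neg_mul_le_pairingIntegrand (hp : 1 < p) (hζ : ∀ x, 0 ≤ ζ x) {x y : Rn n} (hy : ζ y = 0)
    (hK : 0 ≤ K (x - y)) :
    -(caccioppoliTestFun p M u ζ x * (truncation M u y ^ (p - 1) * K (x - y))) ≤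
      pairingIntegrand p K u (caccioppoliTestFun p M u ζ) (x, y) := by
  have hx : 0 ≤ ζ x ^ p := Real.rpow_nonneg (hζ x) p
  calc -(caccioppoliTestFun p M u ζ x * (truncation M u y ^ (p - 1) * K (x - y)))
      = -(truncation M u y ^ (p - 1) * truncation M u x) * ζ x ^ p * K (x - y) := by
        rw [caccioppoliTestFun]; ring
    _ ≤ Hp p (u x - u y) * truncation M u x * ζ x ^ p * K (x - y) := by
        gcongr
        exact neg_le_Hp_sub_mul_truncation hp (u x) (u y) M
    _ = pairingIntegrand p K u (caccioppoliTestFun p M u ζ) (x, y) := by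
        rw [pairingIntegrand, caccioppoliTestFun_eq_zero (by linarith) hy, sub_zero,
          caccioppoliTestFun, mul_assoc (Hp p _)]

theorem neg_supTail_mul_le_setIntegral_prod_compl (hK : IsDominatedKernel n p s Λ K)
    (hu : MemX n p s Ω u) (hζ : IsCutoff C ζ) (hp : 1 < p) (hs0 : 0 < s) (hs1 : s < 1)
    (hM : 0 ≤ M) (hr : 0 < r) (hBΩ : ball x₀ r ⊆ Ω) (hζB : tsupport ζ ⊆ ball x₀ r)
    (hF : IntegrableOn (pairingIntegrand p K u (caccioppoliTestFun p M u ζ))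
      (ball x₀ r ×ˢ (ball x₀ r)ᶜ)) :
    -(supTail p K (ball x₀ r) (tsupport ζ) (truncation M u) *
        ∫ x in ball x₀ r, caccioppoliTestFun p M u ζ x) ≤
      ∫ z in ball x₀ r ×ˢ (ball x₀ r)ᶜ,
        pairingIntegrand p K u (caccioppoliTestFun p M u ζ) z := by
  set B := ball x₀ r
  set w := truncation M u
  set φ := caccioppoliTestFun p M u ζ
  have hps : 0 < p * s := by positivity
  have hw := memX_truncation hu (by linarith : 0 ≤ p) hM
  have hKm := hK.measurable
  have hwm : Measurable w := hw.1
  have hB : MeasurableSet Bᶜ := measurableSet_ball.compl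
  have φ_integrable : IntegrableOn φ B :=
    (memX_caccioppoliTestFun hu hζ hp hs0 hs1 hM).integrableOn hp.le hBΩ measure_ball_lt_top.ne
  have φ_eq_zero (x : Rn n) (hx : x ∉ tsupport ζ) : φ x = 0 :=
    caccioppoliTestFun_eq_zero (by linarith) (image_eq_zero_of_notMem_tsupport hx)
  obtain ⟨E, hE⟩ := hK.exists_abs_le_fracKernel_center hps.le hr (isClosed_tsupport ζ) hζB
  have tail_le (x : Rn n) (hx : x ∈ tsupport ζ) (y : Rn n) (hy : y ∈ Bᶜ) :
      |w y ^ (p - 1) * K (x - y)| ≤ E * (|w y| ^ (p - 1) * fracKernel n p s (x₀ - y)) := by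
    rw [abs_mul, Real.abs_rpow_of_nonneg (truncation_nonneg M u y), mul_left_comm]
    gcongr
    exact hE x hx y hy
  have tail_integrable := (hw.integrableOn_tail hp hs0 hs1 hr hBΩ).const_mul E
  have hkm : Measurable fun z : Rn n × Rn n => w z.2 ^ (p - 1) * K (z.1 - z.2) := by fun_prop
  refine (neg_le_neg (setIntegral_prod_mul_le_sSup_mul hB φ_integrable
    (caccioppoliTestFun_nonneg hζ.nonneg) φ_eq_zero hkm tail_integrable tail_le)).trans ?_
  rw [← integral_neg]
  refine setIntegral_mono_on (integrableOn_prod_mul_of_le hB φ_integrable φ_eq_zero hkm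
    tail_integrable tail_le).neg hF (measurableSet_ball.prod hB) fun ⟨x, y⟩ ⟨hx, hy⟩ => ?_
  exact neg_mul_le_pairingIntegrand hp hζ.nonneg
    (image_eq_zero_of_notMem_tsupport fun h => hy (hζB h))
    (hK.nonneg _ (sub_ne_zero.2 (ne_of_mem_of_not_mem hx hy)))

theorem truncation_mul_rpow_mul_nonneg_ae (hV : ∀ᵐ x, 0 ≤ V x) (hζ : ∀ x, 0 ≤ ζ x) :
    ∀ᵐ x, 0 ≤ (truncation M u x * ζ x) ^ p * V x := by
  filter_upwards [hV] with x hx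
  exact mul_nonneg (Real.rpow_nonneg (mul_nonneg (truncation_nonneg M u x) (hζ x)) p) hx

theorem setIntegral_truncation_mul_rpow_mul_le (hu : MemY n p s Ω V u)
    (hφ : MemY0 n p s Ω V (caccioppoliTestFun p M u ζ)) (hVm : Measurable V)
    (hV : ∀ᵐ x, 0 ≤ V x) (hζ : ∀ x, 0 ≤ ζ x) (hp : 1 < p) (hM : 0 ≤ M) :
    ∫ x in B, (truncation M u x * ζ x) ^ p * V x ≤
      ∫ x, V x * Hp p (u x) * caccioppoliTestFun p M u ζ x := by
  have integrable_rhs :=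
    hu.2.integrable_mul_Hp_mul hφ.2 hp hVm hu.1.1 hφ.1.1.1 hφ.1.2
  have hnonneg := truncation_mul_rpow_mul_nonneg_ae (p := p) (M := M) (u := u) hV hζ
  have hle : ∀ᵐ x, (truncation M u x * ζ x) ^ p * V x ≤
      V x * Hp p (u x) * caccioppoliTestFun p M u ζ x := by
    filter_upwards [hV] with x hx
    rw [mul_comm, mul_assoc]
    exact mul_le_mul_of_nonneg_left (truncation_mul_rpow_le_Hp_mul hp hM (hζ x) (u x)) hx
  calc ∫ x in B, (truncation M u x * ζ x) ^ p * V x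
      ≤ ∫ x in B, V x * Hp p (u x) * caccioppoliTestFun p M u ζ x :=
        integral_mono_of_nonneg (ae_restrict_of_ae hnonneg) integrable_rhs.integrableOn
          (ae_restrict_of_ae hle)
    _ ≤ _ := setIntegral_le_integral integrable_rhs
        (hnonneg.mp (hle.mono fun _ h1 h0 => h0.trans h1))

theorem WeakSubsolution.energy_estimate (hu : WeakSubsolution n p s Ω K V g u)
    (hK : IsDominatedKernel n p s Λ K) (hVm : Measurable V) (hV : ∀ᵐ x, 0 ≤ V x)
    (hζ : IsCutoff C ζ) (hp : 1 < p) (hs0 : 0 < s) (hs1 : s < 1) (hM : 0 ≤ M) (hr : 0 < r)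
    (hBΩ : ball x₀ r ⊆ Ω) (hζB : tsupport ζ ⊆ ball x₀ r) :
    (∫ x in ball x₀ r, (truncation M u x * ζ x) ^ p * V x) +
        2 ^ (-p) * kernelEnergy p K (ball x₀ r) (fun x => ζ x * truncation M u x) ≤
      2 * caccioppoliConst p * cutoffEnergy p K (ball x₀ r) (truncation M u) ζ +
        2 * (supTail p K (ball x₀ r) (tsupport ζ) (truncation M u) *
          ∫ x in ball x₀ r, caccioppoliTestFun p M u ζ x) := by
  have ζ_eq_zero (x : Rn n) (hx : x ∉ ball x₀ r) : ζ x = 0 :=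
    image_eq_zero_of_notMem_tsupport fun h => hx (hζB h)
  have hφ := memY0_caccioppoliTestFun hu.1.1 hVm hζ (fun x hx => ζ_eq_zero x fun h => hx (hBΩ h))
    hp hs0 hs1 hM
  have hF := hK.integrable_pairingIntegrand hp hu.1.1.1 hφ.1
  have split_pairing := integral_prod_eq_of_swap_invariant (measurableSet_ball (x := x₀) (ε := r))
    hF hK.pairingIntegrand_swap fun z h1 h2 => by
      rw [pairingIntegrand, caccioppoliTestFun_eq_zero (by linarith) (ζ_eq_zero _ h1),
        caccioppoliTestFun_eq_zero (by linarith) (ζ_eq_zero _ h2), sub_zero, mul_zero, zero_mul]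
  have tested : (∫ z, pairingIntegrand p K u (caccioppoliTestFun p M u ζ) z) +
      ∫ x, V x * Hp p (u x) * caccioppoliTestFun p M u ζ x ≤ 0 :=
    hu.2 _ hφ (caccioppoliTestFun_nonneg hζ.nonneg)
  have near := le_setIntegral_prod_self hK hu.1.1.1 hζ hp hs0 hs1 hM hBΩ hF.integrableOn
  have far := neg_supTail_mul_le_setIntegral_prod_compl hK hu.1.1.1 hζ hp hs0 hs1 hM hr hBΩ
    hζB hF.integrableOn
  have potential := setIntegral_truncation_mul_rpow_mul_le (B := ball x₀ r) hu.1.1 hφ hVm hV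
    hζ.nonneg hp hM
  rw [Measure.volume_eq_prod] at tested near far
  linarith

end Energy

end NLS

theorem nonlocal_caccioppoli_general {n : ℕ} {p s Λ M r : ℝ} {Ω : Set (Rn n)}
    {V g K u ζ : Rn n → ℝ} {x₀ : Rn n} {L : NNReal} (hp : 1 < p) (hs0 : 0 < s) (hs1 : s < 1)
    (hVm : Measurable V) (hV : ∀ᵐ x, 0 ≤ V x) (hK : IsDominatedKernel n p s Λ K) (hr : 0 < r)
    (hB : ball x₀ r ⊆ Ω) (hu : WeakSubsolution n p s Ω K V g u) (hM : 0 ≤ M)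
    (hζ : LipschitzWith L ζ) (hζs : tsupport ζ ⊆ ball x₀ r) (hζ0 : ∀ x, 0 ≤ ζ x) :
    letI w : Rn n → ℝ := fun y => max (u y - M) 0
    (∫ y in ball x₀ r, (w y * ζ y) ^ p * V y) +
      (∫ z in ball x₀ r ×ˢ ball x₀ r, |ζ z.1 * w z.1 - ζ z.2 * w z.2| ^ p * K (z.1 - z.2)) ≤
    (2 : ℝ) ^ (2 * p + 1) * (1 / 4 + (1 / 2) * (2 * (p - 1)) ^ (p - 1)) *
      (∫ z in ball x₀ r ×ˢ ball x₀ r,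
        max (w z.1) (w z.2) ^ p * |ζ z.1 - ζ z.2| ^ p * K (z.1 - z.2)) +
    (2 : ℝ) ^ (p + 2) *
      sSup ((fun x => ∫ y in (ball x₀ r)ᶜ, w y ^ (p - 1) * K (x - y)) '' tsupport ζ) *
      (∫ y in ball x₀ r, |w y * ζ y ^ p|) := by
  obtain ⟨C, hC⟩ := hζ.continuous.bounded_above_of_compact_support
    (Metric.isCompact_of_isClosed_isBounded (isClosed_tsupport ζ) (isBounded_ball.subset hζs))
  have hcut := IsCutoff.of_lipschitzWith hζ hζ0 fun x => (le_norm_self _).trans (hC x)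
  have abs_test : ∫ y in ball x₀ r, |caccioppoliTestFun p M u ζ y| =
      ∫ y in ball x₀ r, caccioppoliTestFun p M u ζ y :=
    integral_congr_ae <| Eventually.of_forall fun y =>
      abs_of_nonneg (caccioppoliTestFun_nonneg hζ0 y)
  have energy := hu.energy_estimate hK hVm hV hcut hp hs0 hs1 hM hr hB hζs
  have hw := truncation_nonneg M u
  have cutoff_nonneg : 0 ≤ caccioppoliConst p * cutoffEnergy p K (ball x₀ r) (truncation M u) ζ :=
    mul_nonneg (caccioppoliConst_nonneg hp.le) (cutoffEnergy_nonneg hK (by linarith) hw)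
  have tail_nonneg : 0 ≤ supTail p K (ball x₀ r) (tsupport ζ) (truncation M u) *
      ∫ y in ball x₀ r, |caccioppoliTestFun p M u ζ y| :=
    mul_nonneg (supTail_nonneg hK measurableSet_ball hζs hw)
      (integral_nonneg fun _ => abs_nonneg _)
  rw [mul_assoc, ← abs_test] at energy
  rw [mul_assoc, mul_assoc]
  exact add_le_of_add_two_rpow_neg_mul_le (by linarith)
    (integral_nonneg_of_ae (ae_restrict_of_ae (truncation_mul_rpow_mul_nonneg_ae hV hζ0)))
    cutoff_nonneg tail_nonneg energy

/-- nonlocal Caccioppoli type inequality (Theorem 1.5). -/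
theorem nonlocal_caccioppoli
    (n : ℕ) (hn : 1 ≤ n) (p s q lam Lam : ℝ)
    (hp : 1 < p) (hs0 : 0 < s) (hs1 : s < 1)
    (hq : (n : ℝ) / (p * s) < q) (hq1 : 1 < (n : ℝ) / (p * s))
    (hlam : 0 < lam) (hlamLam : lam ≤ Lam)
    (Ω : Set (Rn n)) (hΩopen : IsOpen Ω) (hΩconn : IsConnected Ω)
    (hΩbdd : Bornology.IsBounded Ω)
    (V : Rn n → ℝ) (hV : IsPotential n p s q V)
    (g : Rn n → ℝ) (hg : MemWsp n p s Set.univ g)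
    (K : Rn n → ℝ) (hK : KernelClass n p s lam Lam K)
    (x₀ : Rn n) (hx₀ : x₀ ∈ Ω) (r : ℝ) (hr : 0 < r)
    (h2r : Metric.ball x₀ (2 * r) ⊆ Ω)
    (u : Rn n → ℝ) (hu : WeakSubsolution n p s Ω K V g u)
    (M : ℝ) (hM : 0 < M)
    (ζ : Rn n → ℝ) (hζ : ContDiff ℝ (⊤ : ℕ∞) ζ) (hζc : HasCompactSupport ζ)
    (hζs : tsupport ζ ⊆ Metric.ball x₀ r) (hζ0 : ∀ x, 0 ≤ ζ x) :
    letI w : Rn n → ℝ := fun y => max (u y - M) 0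
    (∫ y in Metric.ball x₀ r, (w y * ζ y) ^ p * V y) +
      (∫ z in (Metric.ball x₀ r) ×ˢ (Metric.ball x₀ r),
        |ζ z.1 * w z.1 - ζ z.2 * w z.2| ^ p * K (z.1 - z.2)) ≤
    (2 : ℝ) ^ (2 * p + 1) * (1 / 4 + (1 / 2) * (2 * (p - 1)) ^ (p - 1)) *
      (∫ z in (Metric.ball x₀ r) ×ˢ (Metric.ball x₀ r),
        (max (w z.1) (w z.2)) ^ p * |ζ z.1 - ζ z.2| ^ p * K (z.1 - z.2)) +
    (2 : ℝ) ^ (p + 2) *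
      sSup ((fun x => ∫ y in (Metric.ball x₀ r)ᶜ, w y ^ (p - 1) * K (x - y)) '' tsupport ζ) *
      (∫ y in Metric.ball x₀ r, |w y * ζ y ^ p|) := by
  obtain ⟨L, hL⟩ := hζ.lipschitzWith_of_hasCompactSupport hζc (by simp)
  exact nonlocal_caccioppoli_general hp hs0 hs1 hV.measurable hV.nonneg_ae
    (hK.isDominatedKernel (by linarith) hs1.le hlam.le) hr
    ((ball_subset_ball (by linarith)).trans h2r) hu hM.le hL hζs hζ0
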